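/- Let D ⊆ Δ⁺ be a basic subset with diagram as defined and C(D) = {ξ_1 ≻ … ≻ ξ_c}. Fix 1 ≤ i ≤ c and write ξ_i = (s,t). Define Λ_i = {η ∈ Δ⁺ : col(η) ≥ t and w_{i−1}(η) > 0} and T_− = {β ∈ Δ⁺ : row(β) = s, col(β) > t, and w_{i−1}(β) < 0}. Then Λ_i ∪ T_− is closed under addition of roots: if η₁, η₂ ∈ Λ_i ∪ T_− and η₁ + η₂ is a root, then η₁ + η₂ ∈ Λ_i ∪ T_−. Moreover, Λ_i itself is closed under addition of roots. -/

import Mathlib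

/-- A positive root `(i,j)`: `n ≥ i > j ≥ 1`. -/
def IsPosRoot (n : ℕ) (γ : ℕ × ℕ) : Prop := 1 ≤ γ.2 ∧ γ.2 < γ.1 ∧ γ.1 ≤ n

/-- `γ` is the sum of the roots `α` and `β` (in either order):
`(i,j) + (j,k) = (i,k)`. -/
def RootSum (α β γ : ℕ × ℕ) : Prop :=
  (α.2 = β.1 ∧ γ = (α.1, β.2)) ∨ (β.2 = α.1 ∧ γ = (β.1, α.2))

/-- A basic subset: a set of positive roots with at most one root in each
row and at most one root in each column. -/
def IsBasic (n : ℕ) (D : Set (ℕ × ℕ)) : Prop :=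
  (∀ γ ∈ D, IsPosRoot n γ) ∧
  (∀ α ∈ D, ∀ β ∈ D, α.1 = β.1 → α = β) ∧
  (∀ α ∈ D, ∀ β ∈ D, α.2 = β.2 → α = β)

/-- A positive root `α` is `D`-singular if `α + β ∈ D` for some positive root `β`. -/
def IsSingular (n : ℕ) (D : Set (ℕ × ℕ)) (α : ℕ × ℕ) : Prop :=
  IsPosRoot n α ∧ ∃ β γ, IsPosRoot n β ∧ RootSum α β γ ∧ γ ∈ D

/-- `M(D) = R(D) \ D`, where `R(D)` is the set of `D`-regular positive roots. -/
def MD (n : ℕ) (D : Set (ℕ × ℕ)) : Set (ℕ × ℕ) :=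
  {γ | IsPosRoot n γ ∧ ¬ IsSingular n D γ ∧ γ ∉ D}
open scoped Classical

/-- Marks used in the diagram of a basic subset. -/
inductive Mark : Type
  | otimes : Mark
  | plus : Mark
  | minus : Mark
  | bullet : Mark
deriving DecidableEq

/-- A marking state of the diagram: a partial assignment of marks to places. -/
abbrev MState : Type := ℕ × ℕ → Option Mark

/-- Step 0 of the diagram construction: every root of `M(D)` is marked `•`. -/
noncomputable def initMark (n : ℕ) (D : Set (ℕ × ℕ)) : MState :=
  fun γ => if γ ∈ MD n D then some Mark.bullet else none

/-- One step of the diagram construction: mark `ξ` with `⊗`, and for every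
decomposition `ξ = α + β` with `col α = col ξ`, `row β = row ξ` and both
`α`, `β` unmarked, mark `α` with `+` and `β` with `−`. -/
noncomputable def markStep (s : MState) (ξ : ℕ × ℕ) : MState :=
  fun γ =>
    if γ = ξ then some Mark.otimes
    else if γ.2 = ξ.2 ∧ ξ.2 < γ.1 ∧ γ.1 < ξ.1 ∧ s γ = none ∧ s (ξ.1, γ.1) = none then
      some Mark.plus
    else if γ.1 = ξ.1 ∧ ξ.2 < γ.2 ∧ γ.2 < ξ.1 ∧ s γ = none ∧ s (γ.2, ξ.2) = none then
      some Mark.minus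
    else s γ

/-- The list of all positive roots in decreasing order with respect to `≻`
(`(k,m) ≻ (i,j)` iff `m < j`, or `m = j` and `k > i`). -/
def rootList (n : ℕ) : List (ℕ × ℕ) :=
  (List.range n).flatMap (fun j0 =>
    (List.range n).filterMap (fun k =>
      if j0 + 1 < n - k then some (n - k, j0 + 1) else none))

/-- Run the diagram construction along a list of places, recording at each
step `i` the pair (`ξ_i`, state after step `i`). -/
noncomputable def diagRun (s : MState) : List (ℕ × ℕ) → List ((ℕ × ℕ) × MState)
  | [] => []
  | ξ :: rest =>
    if s ξ = none then (ξ, markStep s ξ) :: diagRun (markStep s ξ) rest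
    else diagRun s rest

/-- The full run of the diagram construction for a basic subset `D`. -/
noncomputable def diagSeq (n : ℕ) (D : Set (ℕ × ℕ)) : List ((ℕ × ℕ) × MState) :=
  diagRun (initMark n D) (rootList n)

/-- `c`, the number of steps (= number of `⊗` marks) of the diagram. -/
noncomputable def numSteps (n : ℕ) (D : Set (ℕ × ℕ)) : ℕ := (diagSeq n D).length

/-- `ξ_i`, the root marked `⊗` at step `i` (for `1 ≤ i ≤ c`). -/
noncomputable def xiRoot (n : ℕ) (D : Set (ℕ × ℕ)) (i : ℕ) : ℕ × ℕ :=
  (((diagSeq n D).getD (i - 1) ((0, 0), initMark n D))).1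

/-- The state of the diagram after step `i` (for `0 ≤ i ≤ c`); the state
"before step `i`" is `stateAfter n D (i-1)`. -/
noncomputable def stateAfter (n : ℕ) (D : Set (ℕ × ℕ)) : ℕ → MState
  | 0 => initMark n D
  | i + 1 => (((diagSeq n D).getD i ((0, 0), initMark n D))).2

/-- `C(D)`: the set of roots marked `⊗` on the diagram. -/
noncomputable def CD (n : ℕ) (D : Set (ℕ × ℕ)) : Set (ℕ × ℕ) :=
  {γ | γ ∈ (diagSeq n D).map Prod.fst}

/-- `A_γ`: the set of roots of `C(D)` in the same row as `γ`, strictly to the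
left of `γ`. -/
noncomputable def AD (n : ℕ) (D : Set (ℕ × ℕ)) (γ : ℕ × ℕ) : Set (ℕ × ℕ) :=
  {γ' | γ' ∈ CD n D ∧ γ'.1 = γ.1 ∧ γ'.2 < γ.2}
/-- `w_i = r_{ξ_1} ∘ ⋯ ∘ r_{ξ_i}` as a permutation of `ℕ` (each reflection
`r_{(a,b)}` being the transposition of `a` and `b`). -/
noncomputable def wStep (n : ℕ) (D : Set (ℕ × ℕ)) (i : ℕ) : Equiv.Perm ℕ :=
  (List.range i).foldl
    (fun w k => w * Equiv.swap (xiRoot n D (k + 1)).1 (xiRoot n D (k + 1)).2) 1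

/-- `w(γ) > 0`: the image of the root `γ` under `w` is a positive root. -/
def PosUnder (w : Equiv.Perm ℕ) (γ : ℕ × ℕ) : Prop := w γ.2 < w γ.1

/-- The linear order `≻` on positive roots: `(k,m) ≻ (i,j)` iff `m < j`, or
`m = j` and `k > i`.  `SuccG a b` means `a ≻ b`. -/
def SuccG (a b : ℕ × ℕ) : Prop := a.2 < b.2 ∨ (a.2 = b.2 ∧ b.1 < a.1)

/-!
The diagram is read as a scan through all positive roots in decreasing order, carrying along the
marks and the product `w` of the reflections in the roots marked `⊗` so far. Three facts are
invariant when the scan stands in column `t`.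

* A root in a column not yet completed is kept positive by `w` iff it is unmarked or in `M(D)`.
* A row `a > t` satisfies `w a ≤ t` if its root of `D` has been scanned and `w a = a` otherwise.
* `w t = q` if the root `(q, t)` of `D` has been scanned, and `w t ≤ t` otherwise.

The last two show that a root `(s, t)` marked `⊗` has a root of `D` weakly to its left, and that
`w a` never lies between `w t` and `w s` for `a > s`; this makes the first one survive the
reflection. Closedness of `Λ_i ∪ T_-` then only needs that a row `a > s` has `w a = a` or
`w a < w t`.
-/

theorem mem_MD_iff {n : ℕ} {D : Set (ℕ × ℕ)} (hD : ∀ γ ∈ D, IsPosRoot n γ) {a b : ℕ} :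
    (a, b) ∈ MD n D ↔
      IsPosRoot n (a, b) ∧ (∀ m ≤ b, (a, m) ∉ D) ∧ (∀ q, a ≤ q → (q, b) ∉ D) := by
  constructor
  · rintro ⟨hab, hsing, habD⟩
    refine ⟨hab, fun m hm hmD => ?_, fun q hq hqD => ?_⟩
    · rcases hm.eq_or_lt with rfl | hm
      · exact habD hmD
      · exact hsing ⟨hab, (b, m), (a, m), ⟨(hD _ hmD).1, hm, by grind [IsPosRoot]⟩,
          Or.inl ⟨rfl, rfl⟩, hmD⟩
    · rcases hq.eq_or_lt with rfl | hq
      · exact habD hqD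
      · exact hsing ⟨hab, (q, a), (q, b), ⟨by grind [IsPosRoot], hq, (hD _ hqD).2.2⟩,
          Or.inr ⟨rfl, rfl⟩, hqD⟩
  · rintro ⟨hab, hrow, hcol⟩
    refine ⟨hab, ?_, hrow b le_rfl⟩
    rintro ⟨-, ⟨x, y⟩, γ, ⟨-, hyx, -⟩, ⟨hbx, rfl⟩ | ⟨hya, rfl⟩, hγ⟩
    · exact hrow y (hyx.le.trans_eq hbx.symm) hγ
    · exact hcol x (hya.symm.trans_le hyx.le) hγ

theorem markStep_eq_none_iff {σ : MState} {s t a b : ℕ} :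
    markStep σ (s, t) (a, b) = none ↔ σ (a, b) = none ∧ ¬(a = s ∧ b = t) ∧
      ¬(b = t ∧ t < a ∧ a < s ∧ σ (a, b) = none ∧ σ (s, a) = none) ∧
      ¬(a = s ∧ t < b ∧ b < s ∧ σ (a, b) = none ∧ σ (b, t) = none) := by
  simp only [markStep, Prod.mk.injEq]
  split_ifs <;> grind

theorem swap_lt_swap_iff {w : Equiv.Perm ℕ} {s t : ℕ} (hlt : w t < w s)
    (hgap : ∀ a, s < a → w t < w a → w s < w a) {a b : ℕ} (htb : t ≤ b) (hba : b < a) :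
    (w * Equiv.swap s t) b < (w * Equiv.swap s t) a ↔
      w b < w a ∧ ¬(b = t ∧ w a ≤ w s) ∧ ¬(a = s ∧ w t ≤ w b) := by
  have hgap := hgap a
  simp only [Equiv.Perm.mul_apply, Equiv.swap_apply_def]
  split_ifs <;> grind

section RootList

variable {n : ℕ}

theorem mem_rootList {γ : ℕ × ℕ} : γ ∈ rootList n ↔ IsPosRoot n γ := by
  obtain ⟨a, b⟩ := γ
  simp only [rootList, List.mem_flatMap, List.mem_range, List.mem_filterMap,
    Option.ite_none_right_eq_some, Option.some.injEq, Prod.mk.injEq, IsPosRoot]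
  constructor
  · rintro ⟨_, _, _, _, _, _, _⟩
    omega
  · intro h
    exact ⟨b - 1, by omega, n - a, by omega, by omega, by omega, by omega⟩

theorem pairwise_succG_rootList (n : ℕ) : (rootList n).Pairwise SuccG := by
  rw [rootList, List.pairwise_flatMap]
  constructor
  · intro j _
    rw [List.pairwise_filterMap]
    refine List.pairwise_lt_range.imp fun {k l} hkl p hp q hq => ?_
    simp only [Option.ite_none_right_eq_some, Option.some.injEq] at hp hq
    obtain ⟨-, rfl⟩ := hp
    obtain ⟨hl, rfl⟩ := hq
    exact Or.inr ⟨rfl, by simp only; omega⟩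
  · refine List.pairwise_lt_range.imp fun {j k} hjk p hp q hq => ?_
    simp only [List.mem_filterMap, Option.ite_none_right_eq_some, Option.some.injEq] at hp hq
    obtain ⟨_, _, _, rfl⟩ := hp
    obtain ⟨_, _, _, rfl⟩ := hq
    exact Or.inl (Nat.succ_lt_succ hjk)

theorem mem_prefix_rootList_iff {L R : List (ℕ × ℕ)} {ξ : ℕ × ℕ}
    (hsplit : rootList n = L ++ ξ :: R) {ζ : ℕ × ℕ} :
    ζ ∈ L ↔ IsPosRoot n ζ ∧ SuccG ζ ξ := by
  have hsorted := hsplit ▸ pairwise_succG_rootList n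
  rw [List.pairwise_append, List.pairwise_cons] at hsorted
  obtain ⟨-, ⟨hR, -⟩, hL⟩ := hsorted
  have hmem : IsPosRoot n ζ ↔ ζ ∈ L ∨ ζ = ξ ∨ ζ ∈ R := by
    rw [← mem_rootList, hsplit, List.mem_append, List.mem_cons]
  refine ⟨fun h => ⟨hmem.2 (.inl h), hL ζ h ξ List.mem_cons_self⟩, fun ⟨hpos, hsucc⟩ => ?_⟩
  rcases hmem.1 hpos with h | rfl | h
  · exact h
  · grind [SuccG]
  · grind [SuccG]

end RootList

/-- The reflection `r_ξ`. -/
def rootReflection (ξ : ℕ × ℕ) : Equiv.Perm ℕ := Equiv.swap ξ.1 ξ.2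

/-- The product of the reflections in the roots recorded by a run of the diagram. -/
def reflectionProd (l : List ((ℕ × ℕ) × MState)) : Equiv.Perm ℕ :=
  (l.map fun x => rootReflection x.1).prod

/-- One inspection of the scan, which carries along the marks and the product of reflections:
an unmarked root is marked `⊗` and its reflection is multiplied on, a marked one is skipped. -/
noncomputable def scanStep (p : MState × Equiv.Perm ℕ) (ξ : ℕ × ℕ) : MState × Equiv.Perm ℕ :=
  if p.1 ξ = none then (markStep p.1 ξ, p.2 * rootReflection ξ) else p

/-- The marks and the product of reflections after inspecting the roots of `L`. -/
noncomputable def scan (n : ℕ) (D : Set (ℕ × ℕ)) (L : List (ℕ × ℕ)) : MState × Equiv.Perm ℕ :=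
  L.foldl scanStep (initMark n D, 1)

section Scan

variable {n : ℕ} {D : Set (ℕ × ℕ)} {i : ℕ}

theorem exists_split_of_lt_length_diagRun (l : List (ℕ × ℕ)) (p : MState × Equiv.Perm ℕ)
    (hi : i < (diagRun p.1 l).length) :
    ∃ L R, l = L ++ (diagRun p.1 l)[i].1 :: R ∧
      (L.foldl scanStep p).1 (diagRun p.1 l)[i].1 = none ∧
      (L.foldl scanStep p).2 = p.2 * reflectionProd ((diagRun p.1 l).take i) := by
  induction l generalizing p i with
  | nil => simp [diagRun] at hi
  | cons ξ l ih =>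
    by_cases hξ : p.1 ξ = none
    · have hrun : diagRun p.1 (ξ :: l) = (ξ, markStep p.1 ξ) :: diagRun (scanStep p ξ).1 l := by
        simp [diagRun, scanStep, hξ]
      simp only [hrun] at hi ⊢
      cases i with
      | zero => exact ⟨[], l, by simp, by simpa using hξ, by simp [reflectionProd]⟩
      | succ i =>
        obtain ⟨L, R, hl, hnone, hprod⟩ := ih (scanStep p ξ) (by simpa using hi)
        refine ⟨ξ :: L, R, by simpa using hl, by simpa using hnone, ?_⟩
        rw [List.foldl_cons, hprod]
        simp [scanStep, hξ, reflectionProd, mul_assoc]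
    · have hrun : diagRun p.1 (ξ :: l) = diagRun p.1 l := by simp [diagRun, hξ]
      have hskip : scanStep p ξ = p := if_neg hξ
      simp only [hrun] at hi ⊢
      obtain ⟨L, R, hl, hnone, hprod⟩ := ih p hi
      exact ⟨ξ :: L, R, by simpa using hl, by simpa [hskip] using hnone,
        by simpa [hskip] using hprod⟩

theorem wStep_eq_reflectionProd (hi : i ≤ numSteps n D) :
    wStep n D i = reflectionProd ((diagSeq n D).take i) := by
  induction i with
  | zero => simp [wStep, reflectionProd]
  | succ i ih =>
    have hlt : i < (diagSeq n D).length := hi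
    have hsucc : wStep n D (i + 1) = wStep n D i * rootReflection (xiRoot n D (i + 1)) := by
      simp [wStep, List.range_succ, rootReflection]
    have hxi : xiRoot n D (i + 1) = (diagSeq n D)[i].1 := by simp [xiRoot, hlt]
    rw [hsucc, ih hlt.le, hxi, List.take_succ_eq_append_getElem hlt, reflectionProd,
      reflectionProd, List.map_append, List.prod_append]
    simp

theorem exists_scan_eq_wStep (hi1 : 1 ≤ i) (hic : i ≤ numSteps n D) :
    ∃ L R, rootList n = L ++ xiRoot n D i :: R ∧ (scan n D L).1 (xiRoot n D i) = none ∧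
      (scan n D L).2 = wStep n D (i - 1) := by
  have hlt : i - 1 < (diagSeq n D).length := (Nat.sub_one_lt_of_le hi1 le_rfl).trans_le hic
  have hxi : xiRoot n D i = (diagSeq n D)[i - 1].1 := by simp [xiRoot, hlt]
  rw [hxi, wStep_eq_reflectionProd hlt.le]
  obtain ⟨L, R, hl, hnone, hprod⟩ :=
    exists_split_of_lt_length_diagRun (rootList n) (initMark n D, 1) hlt
  exact ⟨L, R, hl, hnone, hprod.trans (one_mul _)⟩

end Scan

/-- The loop invariant of the scan: `L` holds the roots inspected so far, none of them to the right
of column `t`, and `σ` and `w` are the marks and the product of reflections reached. -/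
structure ScanInvariant (n : ℕ) (D : Set (ℕ × ℕ)) (L : List (ℕ × ℕ)) (t : ℕ) (σ : MState)
    (w : Equiv.Perm ℕ) : Prop where
  lt_iff : ∀ {a b}, IsPosRoot n (a, b) → t ≤ b →
    (w b < w a ↔ σ (a, b) = none ∨ (a, b) ∈ MD n D)
  not_mem_MD : ∀ {γ}, σ γ = none → γ ∉ MD n D
  not_mem_of_none : ∀ {γ}, σ γ = none → γ ∉ L
  row_le : ∀ {a m}, t < a → (a, m) ∈ D → (a, m) ∈ L → w a ≤ t
  row_eq : ∀ {a}, t < a → (∀ m, (a, m) ∈ D → (a, m) ∉ L) → w a = a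
  col_eq : ∀ {q}, (q, t) ∈ D → (q, t) ∈ L → w t = q
  col_le : (∀ q, (q, t) ∈ D → (q, t) ∉ L) → w t ≤ t

namespace ScanInvariant

variable {n : ℕ} {D : Set (ℕ × ℕ)} {L : List (ℕ × ℕ)} {s t : ℕ} {σ : MState}
  {w : Equiv.Perm ℕ}

theorem init (n : ℕ) (D : Set (ℕ × ℕ)) (t : ℕ) : ScanInvariant n D [] t (initMark n D) 1 where
  lt_iff {a b} hab _ := by
    by_cases hM : (a, b) ∈ MD n D <;> simp [initMark, hM, hab.2.1]
  not_mem_MD {γ} hγ hM := by simp [initMark, hM] at hγ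
  not_mem_of_none _ := List.not_mem_nil
  row_le _ _ h := absurd h List.not_mem_nil
  row_eq _ _ := rfl
  col_eq _ h := absurd h List.not_mem_nil
  col_le _ := le_rfl

theorem apply_le_self (h : ScanInvariant n D L t σ w) {a : ℕ} (hta : t < a) : w a ≤ a := by
  by_cases hrow : ∀ m, (a, m) ∈ D → (a, m) ∉ L
  · exact (h.row_eq hta hrow).le
  · push Not at hrow
    obtain ⟨m, hmD, hmL⟩ := hrow
    exact (h.row_le hta hmD hmL).trans hta.le

theorem advance_column (h : ScanInvariant n D L t σ w) {t' : ℕ} (htt' : t < t')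
    (hL : ∀ γ ∈ L, γ.2 < t') : ScanInvariant n D L t' σ w where
  lt_iff hab hb := h.lt_iff hab (htt'.le.trans hb)
  not_mem_MD := h.not_mem_MD
  not_mem_of_none := h.not_mem_of_none
  row_le ha hmD hmL := (h.row_le (htt'.trans ha) hmD hmL).trans htt'.le
  row_eq ha hrow := h.row_eq (htt'.trans ha) hrow
  col_eq _ hqL := absurd (hL _ hqL) (lt_irrefl t')
  col_le _ := h.apply_le_self htt'

theorem apply_eq_self_of_mem (h : ScanInvariant n D L t σ w) (hD : IsBasic n D)
    (hstD : (s, t) ∈ D) (hstL : (s, t) ∉ L) : w s = s := by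
  refine h.row_eq (hD.1 _ hstD).2.1 fun m hmD hmL => hstL ?_
  rwa [← hD.2.1 _ hmD _ hstD rfl]

theorem none_of_mem (h : ScanInvariant n D L t σ w) (hD : IsBasic n D)
    (hstD : (s, t) ∈ D) (hstL : (s, t) ∉ L) : σ (s, t) = none := by
  have hst := hD.1 _ hstD
  have hwt : w t ≤ t := h.col_le fun q hqD hqL => hstL (hD.2.2 _ hqD _ hstD rfl ▸ hqL)
  have hlt : w t < w s := by
    rw [h.apply_eq_self_of_mem hD hstD hstL]
    exact hwt.trans_lt hst.2.1
  exact ((h.lt_iff hst le_rfl).1 hlt).resolve_right fun hM => hM.2.2 hstD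

theorem skip (h : ScanInvariant n D L t σ w) (hD : IsBasic n D) (hstL : (s, t) ∉ L)
    (hmarked : σ (s, t) ≠ none) : ScanInvariant n D (L ++ [(s, t)]) t σ w := by
  have hstD : (s, t) ∉ D := fun hstD => hmarked (h.none_of_mem hD hstD hstL)
  have hmem : ∀ γ ∈ D, (γ ∈ L ++ [(s, t)] ↔ γ ∈ L) := by grind
  refine ⟨h.lt_iff, h.not_mem_MD, fun hγ => ?_, fun ha hmD hmL => ?_, fun ha hrow => ?_,
    fun hqD hqL => ?_, fun hcol => ?_⟩
  · grind [h.not_mem_of_none hγ]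
  · exact h.row_le ha hmD ((hmem _ hmD).1 hmL)
  · exact h.row_eq ha fun m hmD => (hmem _ hmD).not.1 (hrow m hmD)
  · exact h.col_eq hqD ((hmem _ hqD).1 hqL)
  · exact h.col_le fun q hqD => (hmem _ hqD).not.1 (hcol q hqD)

section Crossing

variable (h : ScanInvariant n D L t σ w) (hD : IsBasic n D)
  (hL : ∀ {ζ}, ζ ∈ L ↔ IsPosRoot n ζ ∧ SuccG ζ (s, t))
  (hst : IsPosRoot n (s, t)) (hnone : σ (s, t) = none)

include h

include hst hnone in
theorem lt_of_none : w t < w s := (h.lt_iff hst le_rfl).2 (.inl hnone)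

include hL hst hnone in
theorem not_mem_of_mem_column {q : ℕ} (hqD : (q, t) ∈ D) : (q, t) ∉ L := by
  intro hqL
  have hsq : s < q := by grind [SuccG]
  have hlt := h.lt_of_none hst hnone
  rw [h.col_eq hqD hqL] at hlt
  exact (hlt.trans_le (h.apply_le_self hst.2.1)).not_gt hsq

include hD hL hst hnone in
theorem exists_mem_row : ∃ m ≤ t, (s, m) ∈ D := by
  by_contra! hrow
  refine h.not_mem_MD hnone ((mem_MD_iff hD.1).2 ⟨hst, hrow, fun q hsq hqD => ?_⟩)
  rcases hsq.eq_or_lt with rfl | hsq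
  · exact hrow t le_rfl hqD
  · exact h.not_mem_of_mem_column hL hst hnone hqD (hL.2 ⟨hD.1 _ hqD, .inr ⟨rfl, hsq⟩⟩)

include hD hL hst hnone in
theorem apply_le_of_not_mem (hstD : (s, t) ∉ D) : w s ≤ t := by
  obtain ⟨m, hmt, hmD⟩ := h.exists_mem_row hD hL hst hnone
  have hlt : m < t := hmt.lt_of_ne fun e => hstD (e ▸ hmD)
  exact h.row_le hst.2.1 hmD (hL.2 ⟨hD.1 _ hmD, .inl hlt⟩)

include hD hL in
theorem eq_self_or_lt {a : ℕ} (hts : t < s) (hsa : s < a) : w a = a ∨ w a < w t := by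
  by_cases hrow : ∀ m, (a, m) ∈ D → (a, m) ∉ L
  · exact .inl (h.row_eq (hts.trans hsa) hrow)
  push Not at hrow
  obtain ⟨m, hmD, hmL⟩ := hrow
  have hmt : m ≤ t := by grind [SuccG]
  have hat : IsPosRoot n (a, t) := by grind [IsPosRoot]
  have hatM : (a, t) ∉ MD n D := fun hM => ((mem_MD_iff hD.1).1 hM).2.1 m hmt hmD
  have hatL : (a, t) ∈ L := hL.2 ⟨hat, .inr ⟨rfl, hsa⟩⟩
  have hneg : ¬ w t < w a := fun hlt =>
    ((h.lt_iff hat le_rfl).1 hlt).elim (fun hnone => h.not_mem_of_none hnone hatL) hatM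
  exact .inr ((not_lt.1 hneg).lt_of_ne fun e => hat.2.1.ne' (w.injective e))

include hD hL in
theorem apply_lt_of_lt {a : ℕ} (hts : t < s) (hsa : s < a) (hlt : w t < w a) : w s < w a := by
  have ha : w a = a := (h.eq_self_or_lt hD hL hts hsa).resolve_right hlt.not_gt
  rw [ha]
  exact (h.apply_le_self hts).trans_lt hsa

include hD hL hst hnone in
theorem none_and_none_iff {k : ℕ} (htk : t < k) (hks : k < s) :
    σ (k, t) = none ∧ σ (s, k) = none ↔ w t < w k ∧ w k < w s := by
  have hkt : IsPosRoot n (k, t) := ⟨hst.1, htk, hks.le.trans hst.2.2⟩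
  have hsk : IsPosRoot n (s, k) := ⟨hst.1.trans htk.le, hks, hst.2.2⟩
  rw [h.lt_iff hkt le_rfl, h.lt_iff hsk htk.le]
  refine ⟨fun hkn => ⟨.inl hkn.1, .inl hkn.2⟩, fun hpos => ?_⟩
  have hskM : (s, k) ∉ MD n D := fun hM => by
    obtain ⟨m, hmt, hmD⟩ := h.exists_mem_row hD hL hst hnone
    exact ((mem_MD_iff hD.1).1 hM).2.1 m (hmt.trans htk.le) hmD
  have hktM : (k, t) ∉ MD n D := fun hM => by
    obtain ⟨-, hrow, hcol⟩ := (mem_MD_iff hD.1).1 hM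
    have hwk : w k = k := h.row_eq htk fun m hmD hmL => hrow m (by grind [SuccG]) hmD
    have hws : w s ≤ t := h.apply_le_of_not_mem hD hL hst hnone (hcol s hks.le)
    have hlt : w k < w s := (h.lt_iff hsk htk.le).2 hpos.2
    omega
  exact ⟨hpos.1.resolve_right hktM, hpos.2.resolve_right hskM⟩

include hD hL hst hnone in
theorem markStep_eq_none_or_mem_MD_iff {a b : ℕ} (hab : IsPosRoot n (a, b)) (htb : t ≤ b) :
    markStep σ (s, t) (a, b) = none ∨ (a, b) ∈ MD n D ↔
      w b < w a ∧ ¬(b = t ∧ w a ≤ w s) ∧ ¬(a = s ∧ w t ≤ w b) := by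
  have hM : σ (a, b) = none → (a, b) ∉ MD n D := h.not_mem_MD
  have hsign := h.lt_iff hab htb
  have hba : b < a := hab.2.1
  rw [markStep_eq_none_iff]
  rcases htb.eq_or_lt with rfl | htb
  · rcases lt_trichotomy a s with has | rfl | hsa
    · have hplus := h.none_and_none_iff hD hL hst hnone hba has
      have hne : w a ≠ w s := w.injective.ne has.ne
      grind
    · simp [hnone, hM hnone]
    · have hgap := h.apply_lt_of_lt hD hL hst.2.1 hsa
      grind
  · by_cases has : a = s
    · subst has
      have hminus := h.none_and_none_iff hD hL hst hnone htb hba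
      have hne : w t ≠ w b := w.injective.ne htb.ne
      grind
    · simp [hsign, htb.ne', has]

include hD hL hst hnone in
theorem cross : ScanInvariant n D (L ++ [(s, t)]) t (markStep σ (s, t))
    (w * rootReflection (s, t)) := by
  have hother : ∀ {a}, t < a → a ≠ s → (w * rootReflection (s, t)) a = w a := fun ha has =>
    congrArg w (Equiv.swap_apply_of_ne_of_ne has ha.ne')
  have ht : (w * rootReflection (s, t)) t = w s := congrArg w (Equiv.swap_apply_right s t)
  have hs : (w * rootReflection (s, t)) s = w t := congrArg w (Equiv.swap_apply_left s t)
  have hstL : (s, t) ∉ L := h.not_mem_of_none hnone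
  have hcol := fun q => h.not_mem_of_mem_column (q := q) hL hst hnone
  refine ⟨fun hab htb => ?_, fun hγ => ?_, fun hγ => ?_, fun {a m} ha hmD hmL => ?_,
    fun {a} ha hrow => ?_, fun {q} hqD hqL => ?_, fun hcol' => ?_⟩
  · rw [h.markStep_eq_none_or_mem_MD_iff hD hL hst hnone hab htb]
    exact swap_lt_swap_iff (h.lt_of_none hst hnone)
      (fun _ => h.apply_lt_of_lt hD hL hst.2.1) htb hab.2.1
  · exact h.not_mem_MD (markStep_eq_none_iff.1 hγ).1
  · grind [h.not_mem_of_none (markStep_eq_none_iff.1 hγ).1, markStep_eq_none_iff.1 hγ]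
  · by_cases has : a = s
    · rw [has, hs]
      exact h.col_le hcol
    · rw [hother ha has]
      exact h.row_le ha hmD (by grind)
  · have has : a ≠ s := by
      rintro rfl
      obtain ⟨m, hmt, hmD⟩ := h.exists_mem_row hD hL hst hnone
      grind [SuccG, hD.1 _ hmD]
    rw [hother ha has]
    exact h.row_eq ha (by grind)
  · obtain rfl : q = s := by grind
    rw [ht, h.apply_eq_self_of_mem hD hqD hstL]
  · rw [ht]
    exact h.apply_le_of_not_mem hD hL hst hnone fun hstD => hcol' s hstD (by simp)

end Crossing

end ScanInvariant

theorem scanInvariant_scan {n : ℕ} {D : Set (ℕ × ℕ)} (hD : IsBasic n D) {L R : List (ℕ × ℕ)}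
    {ξ : ℕ × ℕ} (hsplit : rootList n = L ++ ξ :: R) :
    ScanInvariant n D L ξ.2 (scan n D L).1 (scan n D L).2 := by
  induction L using List.reverseRecOn generalizing ξ R with
  | nil => exact .init n D ξ.2
  | append_singleton L ζ ih =>
    obtain ⟨s, t⟩ := ζ
    have hsplit' : rootList n = L ++ (s, t) :: ξ :: R := by simpa using hsplit
    have hL : ∀ {ζ}, ζ ∈ L ↔ IsPosRoot n ζ ∧ SuccG ζ (s, t) := mem_prefix_rootList_iff hsplit'
    obtain ⟨hst, hsucc⟩ := (mem_prefix_rootList_iff (ζ := (s, t)) hsplit).1 (by simp)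
    have hstep : ScanInvariant n D (L ++ [(s, t)]) t (scan n D (L ++ [(s, t)])).1
        (scan n D (L ++ [(s, t)])).2 := by
      rw [scan, List.foldl_append, List.foldl_cons, List.foldl_nil, ← scan, scanStep]
      split_ifs with hnone
      · exact (ih hsplit').cross hD hL hst hnone
      · exact (ih hsplit').skip hD (by simp [hL, SuccG]) hnone
    rcases (show t ≤ ξ.2 by grind [SuccG]).eq_or_lt with rfl | htξ
    · exact hstep
    · exact hstep.advance_column htξ (by grind [SuccG])

/-- Closedness of a set of roots under addition of roots. -/
def SumClosed (X : Set (ℕ × ℕ)) : Prop :=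
  ∀ α ∈ X, ∀ β ∈ X, ∀ γ, RootSum α β γ → γ ∈ X

/-- The set `Λ_i`, for an arbitrary permutation `w` in place of `w_{i-1}`. -/
def posPart (n t : ℕ) (w : Equiv.Perm ℕ) : Set (ℕ × ℕ) :=
  {η | IsPosRoot n η ∧ t ≤ η.2 ∧ PosUnder w η}

/-- The set `T_-`, for an arbitrary permutation `w` in place of `w_{i-1}`. -/
def negRow (n s t : ℕ) (w : Equiv.Perm ℕ) : Set (ℕ × ℕ) :=
  {β | IsPosRoot n β ∧ β.1 = s ∧ t < β.2 ∧ ¬ PosUnder w β}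

section SumClosed

variable {n s t : ℕ} {w : Equiv.Perm ℕ}

theorem sumClosed_of_trans {X : Set (ℕ × ℕ)}
    (htrans : ∀ {a b c}, (a, b) ∈ X → (b, c) ∈ X → (a, c) ∈ X) : SumClosed X := by
  rintro ⟨a, b⟩ hα ⟨c, d⟩ hβ γ (⟨rfl, rfl⟩ | ⟨rfl, rfl⟩)
  · exact htrans hα hβ
  · exact htrans hβ hα

theorem IsPosRoot.trans {a b c : ℕ} (hab : IsPosRoot n (a, b)) (hbc : IsPosRoot n (b, c)) :
    IsPosRoot n (a, c) :=
  ⟨hbc.1, hbc.2.1.trans hab.2.1, hab.2.2⟩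

theorem sumClosed_posPart : SumClosed (posPart n t w) :=
  sumClosed_of_trans fun ⟨hab, _, hwab⟩ ⟨hbc, htc, hwbc⟩ =>
    ⟨hab.trans hbc, htc, hwbc.trans hwab⟩

theorem sumClosed_posPart_union_negRow (hlt : w t < w s) (hle : ∀ c, t < c → w c ≤ c)
    (hrow : ∀ a, s < a → w a = a ∨ w a < w t) :
    SumClosed (posPart n t w ∪ negRow n s t w) := by
  refine sumClosed_of_trans fun {a b c} hab hbc => ?_
  rcases hab with hab | ⟨hab, rfl, htb, -⟩ <;> rcases hbc with hbc | ⟨hbc, rfl, htc, -⟩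
  · exact .inl (sumClosed_posPart _ hab _ hbc _ (.inl ⟨rfl, rfl⟩))
  · have hac := hab.1.trans hbc
    have hwa : w a = a := (hrow a hab.1.2.1).resolve_right (hlt.trans hab.2.2).not_gt
    have hwac : w c < w a := hwa.symm ▸ (hle c htc).trans_lt hac.2.1
    exact .inl ⟨hac, htc.le, hwac⟩
  · have hac := hab.trans hbc.1
    rcases hbc.2.1.eq_or_lt with rfl | htc
    · exact .inl ⟨hac, le_rfl, hlt⟩
    · by_cases hwac : PosUnder w (a, c)
      · exact .inl ⟨hac, htc.le, hwac⟩
      · exact .inr ⟨hac, rfl, htc, hwac⟩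
  · exact absurd hab.2.1 (lt_irrefl _)

end SumClosed

/-- with `ξ_i = (s,t)`, the sets
`Λ_i = {η ∈ Δ⁺ : col η ≥ t, w_{i-1}(η) > 0}` and
`T_- = {β ∈ Δ⁺ : row β = s, col β > t, w_{i-1}(β) < 0}` satisfy:
`Λ_i ∪ T_-` is closed under addition of roots, and so is `Λ_i`. -/
theorem stmt13 (n : ℕ) (hn : 2 ≤ n) (D : Set (ℕ × ℕ)) (hD : IsBasic n D)
    (i : ℕ) (hi1 : 1 ≤ i) (hic : i ≤ numSteps n D)
    (s t : ℕ) (hst : xiRoot n D i = (s, t))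
    (Λi Tm : Set (ℕ × ℕ))
    (hΛ : Λi = {η | IsPosRoot n η ∧ t ≤ η.2 ∧ PosUnder (wStep n D (i - 1)) η})
    (hT : Tm = {β | IsPosRoot n β ∧ β.1 = s ∧ t < β.2 ∧
      ¬ PosUnder (wStep n D (i - 1)) β}) :
    (∀ η₁ ∈ Λi ∪ Tm, ∀ η₂ ∈ Λi ∪ Tm, ∀ γ, RootSum η₁ η₂ γ → γ ∈ Λi ∪ Tm) ∧
    (∀ η₁ ∈ Λi, ∀ η₂ ∈ Λi, ∀ γ, RootSum η₁ η₂ γ → γ ∈ Λi) := by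
  obtain ⟨L, R, hsplit, hnone, hw⟩ := exists_scan_eq_wStep hi1 hic
  rw [hst] at hsplit hnone
  have h := scanInvariant_scan hD hsplit
  rw [hw] at h
  have hL := fun {ζ} => mem_prefix_rootList_iff (ζ := ζ) hsplit
  have hpos : IsPosRoot n (s, t) := mem_rootList.1 (by simp [hsplit])
  subst hΛ hT
  exact ⟨sumClosed_posPart_union_negRow (h.lt_of_none hpos hnone) (fun _ => h.apply_le_self)
    (fun _ => h.eq_self_or_lt hD hL hpos.2.1), sumClosed_posPart⟩
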